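/- Let d ≥ 1 be an integer and let α, β ∈ ℝ satisfy α + β > d (with no upper restriction on α or β). Then there exists a constant C > 0 such that for every n ∈ ℤ^d one has ∑_{n₁ ∈ ℤ^d, (1/2)|n−n₁| ≤ |n₁| ≤ 2|n−n₁|} ⟨n₁⟩^{-α} ⟨n − n₁⟩^{-β} ≤ C ⟨n⟩^{d − α − β}. -/

import Mathlib

/-- Japanese bracket of a lattice point `n ∈ ℤ^d`: `⟨n⟩ = (1 + |n|²)^{1/2}`
where `|·|` is the Euclidean norm. -/
noncomputable def jb {d : ℕ} (n : Fin d → ℤ) : ℝ :=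
  Real.sqrt (1 + ∑ i, ((n i : ℝ)) ^ 2)

/-- Euclidean norm of a lattice point `n ∈ ℤ^d`. -/
noncomputable def enorm' {d : ℕ} (n : Fin d → ℤ) : ℝ :=
  Real.sqrt (∑ i, ((n i : ℝ)) ^ 2)

/-!
On the resonant region both factors are comparable to `⟨n₁⟩`, so the summand is comparable to
`⟨n₁⟩ ^ (-(α + β))`; moreover `⟨n⟩ ≤ ⟨n - n₁⟩ + ⟨n₁⟩ ≲ ⟨n₁⟩`, so the sum is dominated by the tail
`∑_{⟨m⟩ ≳ ⟨n⟩} ⟨m⟩ ^ (-(α + β))`. Cut the tail into dyadic shells: the shell `⟨m⟩ ∼ 2 ^ k ⟨n⟩`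
has `O((2 ^ k ⟨n⟩) ^ d)` points and hence contributes `O((2 ^ k ⟨n⟩) ^ (d - α - β))`, which is a
convergent geometric series because `α + β > d`. The same argument applies to any positive
subadditive weight of polynomial growth on a group.
-/

open Set
open scoped ENNReal

section Rpow

variable {x y K : ℝ}

lemma rpow_neg_le_of_comparable (hx : 0 < x) (hy : 0 < y) (hxy : x ≤ K * y) (hyx : y ≤ K * x)
    (b : ℝ) : x ^ (-b) ≤ K ^ |b| * y ^ (-b) := by
  have hK : 0 < K := pos_of_mul_pos_left (hx.trans_le hxy) hy.le
  rcases le_total 0 b with hb | hb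
  · calc x ^ (-b) = K ^ b * (K * x) ^ (-b) := by
          rw [Real.mul_rpow hK.le hx.le, ← mul_assoc, ← Real.rpow_add hK, add_neg_cancel,
            Real.rpow_zero, one_mul]
      _ ≤ K ^ |b| * y ^ (-b) := by
          rw [abs_of_nonneg hb]
          gcongr ?_ * ?_
          exact Real.rpow_le_rpow_of_nonpos hy hyx (neg_nonpos.2 hb)
  · calc x ^ (-b) ≤ (K * y) ^ (-b) := Real.rpow_le_rpow hx.le hxy (neg_nonneg.2 hb)
      _ = K ^ |b| * y ^ (-b) := by rw [abs_of_nonpos hb, Real.mul_rpow hK.le hy.le]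

lemma rpow_neg_mul_rpow_neg_le_of_comparable (hx : 0 < x) (hy : 0 < y) (hxy : x ≤ K * y)
    (hyx : y ≤ K * x) (a b : ℝ) : x ^ (-a) * y ^ (-b) ≤ K ^ |b| * x ^ (-(a + b)) :=
  calc x ^ (-a) * y ^ (-b) ≤ x ^ (-a) * (K ^ |b| * x ^ (-b)) := by
        gcongr
        exact rpow_neg_le_of_comparable hy hx hyx hxy b
    _ = K ^ |b| * x ^ (-(a + b)) := by
        rw [neg_add, Real.rpow_add hx]
        ring

end Rpow

/-- A weight `w` has polynomial growth of degree `D` if its sublevel sets `{w ≤ T}`, `T > 0`, have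
`O(T ^ D)` points. Cardinalities are taken in `ℝ≥0∞`, so the sublevel sets are in particular
finite. -/
def HasPolynomialGrowth {ι : Type*} (w : ι → ℝ) (D : ℝ) : Prop :=
  ∃ A : ℝ, 0 < A ∧ ∀ T : ℝ, 0 < T → ({i | w i ≤ T}.encard : ℝ≥0∞) ≤ ENNReal.ofReal (A * T ^ D)

namespace HasPolynomialGrowth

variable {ι : Type*} {w : ι → ℝ} {D : ℝ}

lemma exists_tsum_dyadic_shell_le (hw : HasPolynomialGrowth w D) (s : ℝ) :
    ∃ B : ℝ, 0 < B ∧ ∀ R : ℝ, 0 < R →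
      ∑' i : {i | R ≤ w i ∧ w i ≤ 2 * R}, ENNReal.ofReal (w i ^ (-s))
        ≤ ENNReal.ofReal (B * R ^ (D - s)) := by
  obtain ⟨A, hA, hcard⟩ := hw
  refine ⟨A * 2 ^ D * 2 ^ |s|, by positivity, fun R hR ↦ ?_⟩
  have hterm (i : {i | R ≤ w i ∧ w i ≤ 2 * R}) : w i ^ (-s) ≤ 2 ^ |s| * R ^ (-s) :=
    rpow_neg_le_of_comparable (hR.trans_le i.2.1) hR i.2.2 (by linarith [i.2.1]) s
  calc ∑' i : {i | R ≤ w i ∧ w i ≤ 2 * R}, ENNReal.ofReal (w i ^ (-s))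
      ≤ ∑' _ : {i | R ≤ w i ∧ w i ≤ 2 * R}, ENNReal.ofReal (2 ^ |s| * R ^ (-s)) :=
        ENNReal.tsum_le_tsum fun i ↦ ENNReal.ofReal_le_ofReal (hterm i)
    _ = {i | R ≤ w i ∧ w i ≤ 2 * R}.encard * ENNReal.ofReal (2 ^ |s| * R ^ (-s)) :=
        ENNReal.tsum_set_const _ _
    _ ≤ {i | w i ≤ 2 * R}.encard * ENNReal.ofReal (2 ^ |s| * R ^ (-s)) := by
        gcongr
        exact fun h ↦ h.2
    _ ≤ ENNReal.ofReal (A * (2 * R) ^ D) * ENNReal.ofReal (2 ^ |s| * R ^ (-s)) := by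
        gcongr
        exact hcard _ (by positivity)
    _ = ENNReal.ofReal (A * 2 ^ D * 2 ^ |s| * R ^ (D - s)) := by
        rw [← ENNReal.ofReal_mul (by positivity), Real.mul_rpow zero_le_two hR.le,
          sub_eq_add_neg, Real.rpow_add hR]
        ring_nf

lemma exists_tsum_tail_le (hw : HasPolynomialGrowth w D) {s : ℝ} (hs : D < s) :
    ∃ C : ℝ, 0 < C ∧ ∀ R : ℝ, 0 < R →
      ∑' i : {i | R ≤ w i}, ENNReal.ofReal (w i ^ (-s)) ≤ ENNReal.ofReal (C * R ^ (D - s)) := by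
  obtain ⟨B, hB, hshell⟩ := hw.exists_tsum_dyadic_shell_le s
  set q : ℝ := 2 ^ (D - s)
  have hq0 : 0 < q := by positivity
  have hq1 : q < 1 := Real.rpow_lt_one_of_one_lt_of_neg one_lt_two (sub_neg.2 hs)
  refine ⟨B * (1 - q)⁻¹, mul_pos hB (inv_pos.2 (sub_pos.2 hq1)), fun R hR ↦ ?_⟩
  have hcover : {i | R ≤ w i} ⊆ ⋃ k : ℕ, {i | 2 ^ k * R ≤ w i ∧ w i ≤ 2 * (2 ^ k * R)} := by
    intro i hi
    obtain ⟨k, hk, hk'⟩ := exists_nat_pow_near ((one_le_div hR).2 hi) one_lt_two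
    rw [le_div_iff₀ hR] at hk
    rw [div_lt_iff₀ hR, pow_succ', mul_assoc] at hk'
    exact mem_iUnion.2 ⟨k, hk, hk'.le⟩
  have hpow (k : ℕ) : B * (2 ^ k * R) ^ (D - s) = B * R ^ (D - s) * q ^ k := by
    rw [Real.mul_rpow (by positivity) hR.le, ← Real.rpow_pow_comm zero_le_two]
    ring
  calc ∑' i : {i | R ≤ w i}, ENNReal.ofReal (w i ^ (-s))
      ≤ ∑' i : ⋃ k : ℕ, {i | 2 ^ k * R ≤ w i ∧ w i ≤ 2 * (2 ^ k * R)},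
          ENNReal.ofReal (w i ^ (-s)) :=
        ENNReal.tsum_mono_subtype (fun i ↦ ENNReal.ofReal (w i ^ (-s))) hcover
    _ ≤ ∑' k : ℕ, ∑' i : {i | 2 ^ k * R ≤ w i ∧ w i ≤ 2 * (2 ^ k * R)},
          ENNReal.ofReal (w i ^ (-s)) :=
        ENNReal.tsum_iUnion_le_tsum (fun i ↦ ENNReal.ofReal (w i ^ (-s))) _
    _ ≤ ∑' k : ℕ, ENNReal.ofReal (B * (2 ^ k * R) ^ (D - s)) :=
        ENNReal.tsum_le_tsum fun k ↦ hshell _ (by positivity)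
    _ = ∑' k : ℕ, ENNReal.ofReal (B * R ^ (D - s) * q ^ k) := by simp only [hpow]
    _ = ENNReal.ofReal (B * R ^ (D - s) * (1 - q)⁻¹) := by
        rw [← ENNReal.ofReal_tsum_of_nonneg (fun k ↦ by positivity)
          ((summable_geometric_of_lt_one hq0.le hq1).mul_left _), tsum_mul_left,
          tsum_geometric_of_lt_one hq0.le hq1]
    _ = ENNReal.ofReal (B * (1 - q)⁻¹ * R ^ (D - s)) := by rw [mul_right_comm]

end HasPolynomialGrowth

theorem discrete_convolution_resonant_bound_general {G : Type*} [AddGroup G] {w : G → ℝ}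
    {D K α β : ℝ} {S : G → Set G} (hw : HasPolynomialGrowth w D) (hpos : ∀ x, 0 < w x)
    (hadd : ∀ x y, w (x + y) ≤ w x + w y) (hK : 0 < K)
    (hS : ∀ n, ∀ m ∈ S n, w (n - m) ≤ K * w m ∧ w m ≤ K * w (n - m)) (hαβ : D < α + β) :
    ∃ C : ℝ, 0 < C ∧ ∀ n : G,
      ∑' m : S n, ENNReal.ofReal (w m ^ (-α) * w (n - m) ^ (-β))
        ≤ ENNReal.ofReal (C * w n ^ (D - α - β)) := by
  obtain ⟨C, hC, htail⟩ := hw.exists_tsum_tail_le hαβ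
  refine ⟨K ^ |β| * (C * (K + 1)⁻¹ ^ (D - α - β)), by positivity, fun n ↦ ?_⟩
  have hsub : S n ⊆ {m | w n * (K + 1)⁻¹ ≤ w m} := fun m hm ↦
    (mul_inv_le_iff₀ (by positivity)).2 <|
    calc w n = w (n - m + m) := by rw [sub_add_cancel]
      _ ≤ w (n - m) + w m := hadd _ _
      _ ≤ w m * (K + 1) := by linarith [(hS n m hm).1]
  calc ∑' m : S n, ENNReal.ofReal (w m ^ (-α) * w (n - m) ^ (-β))
      ≤ ∑' m : S n, ENNReal.ofReal (K ^ |β|) * ENNReal.ofReal (w m ^ (-(α + β))) := by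
        refine ENNReal.tsum_le_tsum fun m ↦ ?_
        rw [← ENNReal.ofReal_mul (by positivity)]
        obtain ⟨hnm, hmn⟩ := hS n m m.2
        exact ENNReal.ofReal_le_ofReal
          (rpow_neg_mul_rpow_neg_le_of_comparable (hpos _) (hpos _) hmn hnm α β)
    _ = ENNReal.ofReal (K ^ |β|) * ∑' m : S n, ENNReal.ofReal (w m ^ (-(α + β))) :=
        ENNReal.tsum_mul_left
    _ ≤ ENNReal.ofReal (K ^ |β|) *
          ∑' m : {m | w n * (K + 1)⁻¹ ≤ w m}, ENNReal.ofReal (w m ^ (-(α + β))) := by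
        gcongr
        exact ENNReal.tsum_mono_subtype (fun m ↦ ENNReal.ofReal (w m ^ (-(α + β)))) hsub
    _ ≤ ENNReal.ofReal (K ^ |β|) *
          ENNReal.ofReal (C * (w n * (K + 1)⁻¹) ^ (D - (α + β))) := by
        gcongr
        exact htail _ (mul_pos (hpos n) (by positivity))
    _ = ENNReal.ofReal (K ^ |β| * (C * (K + 1)⁻¹ ^ (D - α - β)) * w n ^ (D - α - β)) := by
        rw [← ENNReal.ofReal_mul (by positivity), ← sub_sub,
          Real.mul_rpow (hpos n).le (by positivity)]
        ring_nf

section JapaneseBracket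

variable {d : ℕ}

lemma enorm'_nonneg (n : Fin d → ℤ) : 0 ≤ enorm' n :=
  Real.sqrt_nonneg _

lemma enorm'_sq (n : Fin d → ℤ) : enorm' n ^ 2 = ∑ i, (n i : ℝ) ^ 2 :=
  Real.sq_sqrt (by positivity)

lemma jb_sq (n : Fin d → ℤ) : jb n ^ 2 = 1 + enorm' n ^ 2 := by
  rw [enorm'_sq, jb, Real.sq_sqrt (by positivity)]

lemma one_le_jb (n : Fin d → ℤ) : 1 ≤ jb n :=
  Real.one_le_sqrt.2 (le_add_of_nonneg_right (by positivity))

lemma jb_pos (n : Fin d → ℤ) : 0 < jb n :=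
  one_pos.trans_le (one_le_jb n)

lemma enorm'_le_jb (n : Fin d → ℤ) : enorm' n ≤ jb n :=
  Real.sqrt_le_sqrt (le_add_of_nonneg_left zero_le_one)

lemma abs_apply_le_jb (n : Fin d → ℤ) (i : Fin d) : |(n i : ℝ)| ≤ jb n := by
  refine (Real.abs_le_sqrt ?_).trans (enorm'_le_jb n)
  exact Finset.single_le_sum (f := fun i ↦ (n i : ℝ) ^ 2) (fun i _ ↦ sq_nonneg _)
    (Finset.mem_univ i)

lemma jb_le_mul_jb {K : ℝ} (hK : 1 ≤ K) {m n : Fin d → ℤ} (h : enorm' m ≤ K * enorm' n) :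
    jb m ≤ K * jb n := by
  refine le_of_sq_le_sq ?_ (mul_nonneg (zero_le_one.trans hK) (jb_pos n).le)
  calc jb m ^ 2 = 1 + enorm' m ^ 2 := jb_sq m
    _ ≤ K ^ 2 + (K * enorm' n) ^ 2 :=
        add_le_add (one_le_pow₀ hK) (pow_le_pow_left₀ (enorm'_nonneg m) h 2)
    _ = (K * jb n) ^ 2 := by rw [mul_pow, mul_pow, jb_sq]; ring

lemma jb_add_le (m n : Fin d → ℤ) : jb (m + n) ≤ jb m + jb n := by
  have hinner : ∑ i, (m i : ℝ) * n i ≤ jb m * jb n :=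
    (Real.sum_mul_le_sqrt_mul_sqrt _ _ _).trans <|
      mul_le_mul (enorm'_le_jb m) (enorm'_le_jb n) (enorm'_nonneg n) (jb_pos m).le
  have hexpand : enorm' (m + n) ^ 2 = enorm' m ^ 2 + 2 * ∑ i, (m i : ℝ) * n i + enorm' n ^ 2 := by
    simp only [enorm'_sq, Pi.add_apply, Int.cast_add, add_sq, Finset.sum_add_distrib,
      Finset.mul_sum, mul_assoc]
  refine le_of_sq_le_sq ?_ (add_pos (jb_pos m) (jb_pos n)).le
  rw [add_sq, jb_sq, jb_sq, jb_sq, hexpand]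
  linarith

lemma setOf_jb_le_subset_Icc (T : ℝ) :
    {n : Fin d → ℤ | jb n ≤ T} ⊆ Icc (fun _ ↦ -⌊T⌋) (fun _ ↦ ⌊T⌋) := by
  have hcoord (n : Fin d → ℤ) (hn : jb n ≤ T) (i : Fin d) : |n i| ≤ ⌊T⌋ :=
    Int.le_floor.2 (by simpa only [Int.cast_abs] using (abs_apply_le_jb n i).trans hn)
  exact fun n hn ↦ ⟨fun i ↦ (abs_le.1 (hcoord n hn i)).1, fun i ↦ (abs_le.1 (hcoord n hn i)).2⟩

lemma hasPolynomialGrowth_jb (d : ℕ) : HasPolynomialGrowth (jb (d := d)) d := by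
  refine ⟨3 ^ d, by positivity, fun T hT ↦ ?_⟩
  rcases lt_or_ge T 1 with hT1 | hT1
  · have hempty : {n : Fin d → ℤ | jb n ≤ T} = ∅ :=
      eq_empty_of_forall_notMem fun n hn ↦ (hT1.trans_le (one_le_jb n)).not_ge hn
    simp only [hempty, encard_empty, ENat.toENNReal_zero, zero_le]
  have hside : ((⌊T⌋ + 1 - -⌊T⌋).toNat : ℝ) ≤ 3 * T := by
    have hfloor : 0 ≤ ⌊T⌋ := Int.floor_nonneg.2 hT.le
    rw [← Int.cast_natCast, Int.toNat_of_nonneg (by linarith)]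
    push_cast
    linarith [Int.floor_le T]
  calc ({n : Fin d → ℤ | jb n ≤ T}.encard : ℝ≥0∞)
      ≤ ((Icc (fun _ ↦ -⌊T⌋) (fun _ ↦ ⌊T⌋) : Set (Fin d → ℤ)).encard : ℝ≥0∞) := by
        gcongr
        exact setOf_jb_le_subset_Icc T
    _ = ENNReal.ofReal (((⌊T⌋ + 1 - -⌊T⌋).toNat : ℝ) ^ d) := by
        rw [← Finset.coe_Icc, encard_coe_eq_coe_finsetCard, Pi.card_Icc]
        simp
    _ ≤ ENNReal.ofReal (3 ^ d * T ^ (d : ℝ)) := by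
        rw [Real.rpow_natCast, ← mul_pow]
        gcongr

end JapaneseBracket

theorem discrete_convolution_resonant_bound
    (d : ℕ) (hd : 1 ≤ d) (α β : ℝ) (hαβ : (d : ℝ) < α + β) :
    ∃ C : ℝ, 0 < C ∧ ∀ n : Fin d → ℤ,
      ∑' n₁ : {m : Fin d → ℤ //
          enorm' (n - m) ≤ 2 * enorm' m ∧ enorm' m ≤ 2 * enorm' (n - m)},
          ENNReal.ofReal (jb (n₁ : Fin d → ℤ) ^ (-α) * jb (n - (n₁ : Fin d → ℤ)) ^ (-β))
        ≤ ENNReal.ofReal (C * jb n ^ ((d : ℝ) - α - β)) :=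
  discrete_convolution_resonant_bound_general (hasPolynomialGrowth_jb d) jb_pos jb_add_le two_pos
    (fun _ _ hm ↦ hm.imp (jb_le_mul_jb one_le_two) (jb_le_mul_jb one_le_two)) hαβ
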